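/- arXiv:1112.5134 — 2 statements merged into one kernel-verified Lean document; each statement's English description precedes it below -/
import Mathlib

section
/- Let G be a connected graph with a cut vertex and let G = H₁ ∨ H₂ be a corresponding decomposition. Then for every D₁ ∈ Div(H₁) and D₂ ∈ Div(H₂), the rank satisfies r_G(D₁ + D₂) ≥ min{ r_{H₁}(D₁), r_{H₂}(D₂) }. -/
/-- A finite multigraph: vertices `V`, edges `E`, each edge has an (arbitrarily
ordered) pair of endpoints.  Loops are edges whose two endpoints coincide. -/
structure Multigraph where
  V : Type
  E : Type
  [decV : DecidableEq V]
  [fintV : Fintype V]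
  [decE : DecidableEq E]
  [fintE : Fintype E]
  ends : E → V × V

attribute [instance] Multigraph.decV Multigraph.fintV Multigraph.decE Multigraph.fintE

namespace Multigraph

variable (G : Multigraph)

/-- Two vertices are adjacent if some edge joins them. -/
def Adj (v w : G.V) : Prop := ∃ e : G.E, G.ends e = (v, w) ∨ G.ends e = (w, v)

/-- A multigraph is connected if it is nonempty and any two vertices are joined by a walk. -/
def Connected : Prop := Nonempty G.V ∧ ∀ v w : G.V, Relation.ReflTransGen G.Adj v w

/-- The number of edges joining `v` and `w`. -/
def numEdges (v w : G.V) : ℕ :=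
  (Finset.univ.filter fun e : G.E => G.ends e = (v, w) ∨ G.ends e = (w, v)).card

/-- The number of loops based at `v`. -/
def numLoops (v : G.V) : ℕ :=
  (Finset.univ.filter fun e : G.E => G.ends e = (v, v)).card

/-- The valency of `v` (loops count twice). -/
def valency (v : G.V) : ℕ :=
  ∑ e : G.E, ((if (G.ends e).1 = v then 1 else 0) + (if (G.ends e).2 = v then 1 else 0))

/-- The intersection product on vertices: `(v·w)` is the number of edges joining `v` and
`w` when `v ≠ w`, and `(v·v) = -val(v) + 2 loop(v)`. -/
def inter (v w : G.V) : ℤ :=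
  if v = w then -(G.valency v : ℤ) + 2 * (G.numLoops v : ℤ) else (G.numEdges v w : ℤ)

/-- The principal divisor `T_v = Σ_w (v·w) w`. -/
def T (v : G.V) : G.V → ℤ := fun w => G.inter v w

/-- The group of principal divisors, generated by the `T_v`. -/
def Prin : AddSubgroup (G.V → ℤ) := AddSubgroup.closure (Set.range G.T)

/-- The Jacobian group `Div(G)/Prin(G)`. -/
abbrev Jac := (G.V → ℤ) ⧸ G.Prin

/-- A divisor is effective if all its coefficients are nonnegative. -/
def Effective {α : Type} (D : α → ℤ) : Prop := ∀ v, 0 ≤ D v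

/-- The degree of a divisor. -/
def degree {α : Type} [Fintype α] (D : α → ℤ) : ℤ := ∑ v, D v

/-- The Baker–Norine rank of a divisor: `-1` if no effective divisor is linearly
equivalent to `D`, and otherwise the largest `k ≥ 0` such that for every effective
divisor `E` of degree `k` some effective divisor is linearly equivalent to `D - E`. -/
noncomputable def rank (D : G.V → ℤ) : ℤ :=
  sSup {r : ℤ | r = -1 ∨ (0 ≤ r ∧ ∀ E : G.V → ℤ, Effective E → degree E = r →
      ∃ F : G.V → ℤ, Effective F ∧ D - E - F ∈ G.Prin)}

/-- An edge is a loop if its two endpoints coincide. -/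
def IsLoop (e : G.E) : Prop := (G.ends e).1 = (G.ends e).2

/-- The refinement of `G` obtained by inserting `n e` new vertices in the interior of
each edge `e` (subdividing `e` into `n e + 1` edges). -/
def subdivide (n : G.E → ℕ) : Multigraph where
  V := G.V ⊕ (Σ e : G.E, Fin (n e))
  E := Σ e : G.E, Fin (n e + 1)
  ends := fun x =>
    (if h : (x.2 : ℕ) = 0 then Sum.inl (G.ends x.1).1
        else Sum.inr ⟨x.1, ⟨(x.2 : ℕ) - 1, by have := x.2.isLt; omega⟩⟩,
     if h : (x.2 : ℕ) = n x.1 then Sum.inl (G.ends x.1).2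
        else Sum.inr ⟨x.1, ⟨(x.2 : ℕ), by have := x.2.isLt; omega⟩⟩)

/-- The natural map `σ* : Div(G) → Div(G̃)` to a refinement, extending a divisor by
zero on the new vertices. -/
def subdivMap (n : G.E → ℕ) (D : G.V → ℤ) : (G.subdivide n).V → ℤ := Sum.elim D 0

/-- `Ĝ`: the loopless refinement obtained by inserting one new vertex in the interior of
every loop-edge. -/
def hat : Multigraph := G.subdivide fun e => if (G.ends e).1 = (G.ends e).2 then 1 else 0

/-- The rank `r#_G(D) := r_{Ĝ}(σ* D)`. -/
noncomputable def rankSharp (D : G.V → ℤ) : ℤ :=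
  G.hat.rank (G.subdivMap (fun e => if (G.ends e).1 = (G.ends e).2 then 1 else 0) D)

/-- A multigraph is loopless if no edge is a loop. -/
def Loopless : Prop := ∀ e : G.E, (G.ends e).1 ≠ (G.ends e).2

/-- The genus (first Betti number) `g = |E| - |V| + 1` of a connected graph. -/
def genus : ℤ := (Fintype.card G.E : ℤ) - (Fintype.card G.V : ℤ) + 1

/-- The canonical divisor `K#_G = Σ_v (val(v) - 2) v`. -/
def canonical : G.V → ℤ := fun v => (G.valency v : ℤ) - 2

/-- The loopless graph obtained from `G` by removing all loop-edges. -/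
def removeLoops : Multigraph where
  V := G.V
  E := {e : G.E // (G.ends e).1 ≠ (G.ends e).2}
  ends := fun e => G.ends e.1

/-- The virtual graph `G^ω` of a weighted graph `(G, ω)`: attach `ω v` loops at each
vertex `v`. -/
def virt (w : G.V → ℕ) : Multigraph where
  V := G.V
  E := G.E ⊕ (Σ v : G.V, Fin (w v))
  ends := Sum.elim G.ends fun p => (p.1, p.1)

/-- The rank of a divisor on the weighted graph `(G, ω)`: `r_{(G,ω)}(D) := r#_{G^ω}(D)`. -/
noncomputable def rankW (w : G.V → ℕ) (D : G.V → ℤ) : ℤ := (G.virt w).rankSharp D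

/-- The canonical divisor of the weighted graph `(G, ω)`. -/
def canonicalW (w : G.V → ℕ) : G.V → ℤ := fun v => (G.valency v : ℤ) + 2 * (w v : ℤ) - 2

/-- The genus of the weighted graph `(G, ω)`: `b₁(G) + Σ_v ω(v)`. -/
def genusW (w : G.V → ℕ) : ℤ := G.genus + ∑ v, (w v : ℤ)

/-- The rose `R_g`: one vertex and `g` loop-edges. -/
def rose (g : ℕ) : Multigraph where
  V := Unit
  E := Fin g
  ends := fun _ => ((), ())

/-- The subgraph of `G` determined by a set of vertices and a set of edges with
endpoints among them. -/
def subgraph (Vs : Finset G.V) (Es : Finset G.E)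
    (h : ∀ e ∈ Es, (G.ends e).1 ∈ Vs ∧ (G.ends e).2 ∈ Vs) : Multigraph where
  V := {x : G.V // x ∈ Vs}
  E := {e : G.E // e ∈ Es}
  ends := fun e => (⟨(G.ends e.1).1, (h e.1 e.2).1⟩, ⟨(G.ends e.1).2, (h e.1 e.2).2⟩)

/-- Extension of a divisor on a subgraph by zero: `ι_* : Div(H) → Div(G)`. -/
def iota (Vs : Finset G.V) (D : {x : G.V // x ∈ Vs} → ℤ) : G.V → ℤ :=
  fun x => if h : x ∈ Vs then D ⟨x, h⟩ else 0

end Multigraph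

namespace Multigraph

/-- A decomposition `G = H₁ ∨ H₂` of `G` associated to a cut vertex `v`:  `H₁`, `H₂` are
connected subgraphs with `V(H₁) ∩ V(H₂) = {v}`, `E(H₁) ∩ E(H₂) = ∅`, covering `G`. -/
structure Wedge (G : Multigraph) where
  v : G.V
  V1 : Finset G.V
  V2 : Finset G.V
  hv1 : v ∈ V1
  hv2 : v ∈ V2
  E1 : Finset G.E
  E2 : Finset G.E
  cover_V : V1 ∪ V2 = Finset.univ
  inter_V : V1 ∩ V2 = {v}
  cover_E : E1 ∪ E2 = Finset.univ
  disj_E : E1 ∩ E2 = ∅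
  ends1 : ∀ e ∈ E1, (G.ends e).1 ∈ V1 ∧ (G.ends e).2 ∈ V1
  ends2 : ∀ e ∈ E2, (G.ends e).1 ∈ V2 ∧ (G.ends e).2 ∈ V2
  conn1 : (G.subgraph V1 E1 ends1).Connected
  conn2 : (G.subgraph V2 E2 ends2).Connected

/-- The first subgraph `H₁` of a wedge decomposition. -/
def Wedge.H1 {G : Multigraph} (W : G.Wedge) : Multigraph := G.subgraph W.V1 W.E1 W.ends1

/-- The second subgraph `H₂` of a wedge decomposition. -/
def Wedge.H2 {G : Multigraph} (W : G.Wedge) : Multigraph := G.subgraph W.V2 W.E2 W.ends2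

variable (G : Multigraph)

/-- The divisor `div(f)` of an integer-valued function `f` on the vertices
(loops contribute zero). -/
def divOf (f : G.V → ℤ) : G.V → ℤ := fun v =>
  ∑ e : G.E, ((if (G.ends e).1 = v then f v - f (G.ends e).2 else 0)
            + (if (G.ends e).2 = v then f v - f (G.ends e).1 else 0))

/-- An isomorphism of multigraphs (edges may be matched with either orientation). -/
structure Iso (G H : Multigraph) where
  vEquiv : G.V ≃ H.V
  eEquiv : G.E ≃ H.E
  compat : ∀ e : G.E,
    H.ends (eEquiv e) = (vEquiv (G.ends e).1, vEquiv (G.ends e).2) ∨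
    H.ends (eEquiv e) = (vEquiv (G.ends e).2, vEquiv (G.ends e).1)

end Multigraph

namespace Multigraph

lemma inter_eq (G : Multigraph) (v w : G.V) :
    G.inter v w = ∑ e : G.E, -(((if (G.ends e).1 = v then (1:ℤ) else 0) - (if (G.ends e).2 = v then 1 else 0)) *
      ((if (G.ends e).1 = w then (1:ℤ) else 0) - (if (G.ends e).2 = w then 1 else 0))) := by
  unfold inter
  split_ifs with h
  · subst h
    unfold valency numLoops
    rw [Finset.card_filter]
    push_cast
    rw [Finset.mul_sum, ← Finset.sum_neg_distrib, ← Finset.sum_add_distrib]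
    refine Finset.sum_congr rfl fun e _ => ?_
    simp only [Prod.ext_iff]
    by_cases h1 : (G.ends e).1 = v <;> by_cases h2 : (G.ends e).2 = v <;> simp [h1, h2]
  · unfold numEdges
    rw [Finset.card_filter]
    push_cast
    refine Finset.sum_congr rfl fun e _ => ?_
    simp only [Prod.ext_iff]
    by_cases h1 : (G.ends e).1 = v <;> by_cases h2 : (G.ends e).2 = v <;>
    by_cases h3 : (G.ends e).1 = w <;> by_cases h4 : (G.ends e).2 = w <;> simp_all

lemma inter_comm (G : Multigraph) (v w : G.V) : G.inter v w = G.inter w v := by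
  rw [inter_eq, inter_eq]
  exact Finset.sum_congr rfl fun e _ => by ring

lemma sum_inter (G : Multigraph) (v : G.V) : ∑ w, G.inter v w = 0 := by
  simp_rw [inter_eq]
  rw [Finset.sum_comm]
  refine Finset.sum_eq_zero fun e _ => ?_
  rw [Finset.sum_neg_distrib, ← Finset.mul_sum, Finset.sum_sub_distrib]
  simp

lemma degree_prin (G : Multigraph) (D : G.V → ℤ) (h : D ∈ G.Prin) : degree D = 0 := by
  unfold Prin at h
  induction h using AddSubgroup.closure_induction with
  | mem x hx => obtain ⟨v, rfl⟩ := hx; exact G.sum_inter v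
  | zero => simp [degree]
  | add x y _ _ hx hy => simp only [degree, Pi.add_apply, Finset.sum_add_distrib] at *; omega
  | neg x _ hx => simp only [degree, Pi.neg_apply, Finset.sum_neg_distrib] at *; omega

lemma rank_bdd (G : Multigraph) (hG : Nonempty G.V) (D : G.V → ℤ) :
    BddAbove {r : ℤ | r = -1 ∨ (0 ≤ r ∧ ∀ E : G.V → ℤ, Effective E → degree E = r →
      ∃ F : G.V → ℤ, Effective F ∧ D - E - F ∈ G.Prin)} := by
  obtain ⟨v⟩ := hG
  refine ⟨max (-1) (degree D), ?_⟩
  rintro r (rfl | ⟨h0, h⟩)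
  · exact le_max_left _ _
  · obtain ⟨F, hF, hp⟩ := h (Pi.single v r)
      (fun w => by by_cases hw : w = v <;> simp [Pi.single_apply, hw, h0])
      (by simp [degree])
    have := G.degree_prin _ hp
    have hF' : 0 ≤ degree F := Finset.sum_nonneg fun w _ => hF w
    have hs : ∑ w, (Pi.single v r : G.V → ℤ) w = r := by simp
    simp only [degree, Pi.sub_apply, Finset.sum_sub_distrib, hs] at *
    exact le_max_of_le_right (by omega)

lemma le_rank (G : Multigraph) (hG : Nonempty G.V) (D : G.V → ℤ) (r : ℤ)
    (h : r = -1 ∨ (0 ≤ r ∧ ∀ E : G.V → ℤ, Effective E → degree E = r →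
      ∃ F : G.V → ℤ, Effective F ∧ D - E - F ∈ G.Prin)) : r ≤ G.rank D :=
  le_csSup (G.rank_bdd hG D) h

lemma rank_spec (G : Multigraph) (hG : Nonempty G.V) (D E : G.V → ℤ) (hE : Effective E)
    (hd : degree E ≤ G.rank D) : ∃ F : G.V → ℤ, Effective F ∧ D - E - F ∈ G.Prin := by
  have hE' : 0 ≤ degree E := Finset.sum_nonneg fun w _ => hE w
  have hm := Int.csSup_mem ⟨-1, Or.inl rfl⟩ (G.rank_bdd hG D)
  change G.rank D = -1 ∨ (0 ≤ G.rank D ∧ _) at hm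
  obtain h | ⟨_, h⟩ := hm
  · omega
  obtain ⟨v⟩ := hG
  have hs : Effective (Pi.single v (G.rank D - degree E) : G.V → ℤ) := fun w => by
    by_cases hw : w = v <;> simp [Pi.single_apply, hw, hd]
  obtain ⟨F, hF, hp⟩ := h (E + Pi.single v (G.rank D - degree E))
    (fun w => add_nonneg (hE w) (hs w))
    (by
      have : ∑ w, (Pi.single v (G.rank D - degree E) : G.V → ℤ) w = G.rank D - degree E := by simp
      change ∑ w, (E w + (Pi.single v (G.rank D - degree E) : G.V → ℤ) w) = _
      rw [Finset.sum_add_distrib, this]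
      change degree E + (G.rank D - degree E) = G.rank D
      omega)
  refine ⟨F + Pi.single v (G.rank D - degree E), fun w => add_nonneg (hF w) (hs w), ?_⟩
  convert hp using 1
  abel

lemma iota_add (G : Multigraph) (Vs : Finset G.V) (A B : {x : G.V // x ∈ Vs} → ℤ) :
    G.iota Vs (A + B) = G.iota Vs A + G.iota Vs B := by
  funext x; simp only [iota, Pi.add_apply]; split_ifs <;> simp

lemma iota_neg (G : Multigraph) (Vs : Finset G.V) (A : {x : G.V // x ∈ Vs} → ℤ) :
    G.iota Vs (-A) = -G.iota Vs A := by
  funext x; simp only [iota, Pi.neg_apply]; split_ifs <;> simp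

lemma iota_zero (G : Multigraph) (Vs : Finset G.V) :
    G.iota Vs 0 = 0 := by
  funext x; simp [iota]

/-- extension by zero as a homomorphism -/
def iotaHom (G : Multigraph) (Vs : Finset G.V) (Es : Finset G.E)
    (h : ∀ e ∈ Es, (G.ends e).1 ∈ Vs ∧ (G.ends e).2 ∈ Vs) :
    ((G.subgraph Vs Es h).V → ℤ) →+ (G.V → ℤ) where
  toFun := G.iota Vs
  map_zero' := G.iota_zero Vs
  map_add' := G.iota_add Vs

lemma iota_T (G : Multigraph) (Vs : Finset G.V) (Es : Finset G.E)
    (h : ∀ e ∈ Es, (G.ends e).1 ∈ Vs ∧ (G.ends e).2 ∈ Vs)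
    (w : {x : G.V // x ∈ Vs})
    (hw : ∀ e, e ∉ Es → (G.ends e).1 ≠ w.1 ∧ (G.ends e).2 ≠ w.1) :
    G.iota Vs ((G.subgraph Vs Es h).T w) = G.T w.1 := by
  funext x
  simp only [iota, T]
  rw [inter_eq G, ← Finset.sum_subset (Finset.subset_univ Es)
    (fun e _ he => by simp [hw e he])]
  split_ifs with hx
  · refine (inter_eq _ _ _).trans ?_
    rw [← Finset.sum_coe_sort Es]
    refine Finset.sum_congr rfl fun e _ => ?_
    simp [subgraph, Subtype.ext_iff]
  · symm
    refine Finset.sum_eq_zero fun e he => ?_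
    have h1 : (G.ends e).1 ≠ x := fun hh => hx (hh ▸ (h e he).1)
    have h2 : (G.ends e).2 ≠ x := fun hh => hx (hh ▸ (h e he).2)
    simp [h1, h2]

lemma iota_prin (G : Multigraph) (Vs : Finset G.V) (Es : Finset G.E)
    (h : ∀ e ∈ Es, (G.ends e).1 ∈ Vs ∧ (G.ends e).2 ∈ Vs) (v : G.V) (hv : v ∈ Vs)
    (hw : ∀ e, e ∉ Es → ∀ w ∈ Vs, w ≠ v → (G.ends e).1 ≠ w ∧ (G.ends e).2 ≠ w)
    (D : {x : G.V // x ∈ Vs} → ℤ) (hD : D ∈ (G.subgraph Vs Es h).Prin) :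
    G.iota Vs D ∈ G.Prin := by
  have key : ∀ w : (G.subgraph Vs Es h).V, w ≠ (⟨v, hv⟩ : {x : G.V // x ∈ Vs}) →
      G.iota Vs ((G.subgraph Vs Es h).T w) ∈ G.Prin := by
    intro w hwv
    rw [iota_T G Vs Es h w fun e he => hw e he w.1 w.2 fun hh => hwv (Subtype.ext hh)]
    exact AddSubgroup.subset_closure ⟨_, rfl⟩
  unfold Prin at hD
  induction hD using AddSubgroup.closure_induction with
  | mem x hx =>
    obtain ⟨w, rfl⟩ := hx
    by_cases hwv : w = (⟨v, hv⟩ : {x : G.V // x ∈ Vs})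
    · have hs : ∑ u, (G.subgraph Vs Es h).T u = 0 := by
        funext x
        rw [Finset.sum_apply]
        simp only [T]
        simp_rw [fun u => (G.subgraph Vs Es h).inter_comm u x]
        exact (G.subgraph Vs Es h).sum_inter x
      rw [← Finset.add_sum_erase _ _ (Finset.mem_univ w)] at hs
      rw [eq_neg_of_add_eq_zero_left hs]
      change G.iotaHom Vs Es h _ ∈ _
      rw [map_neg]
      refine neg_mem ?_
      rw [map_sum]
      refine sum_mem fun u hu => key u ?_
      rw [← hwv]
      exact Finset.ne_of_mem_erase hu
    · exact key w hwv
  | zero => erw [iota_zero]; exact zero_mem _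
  | add x y _ _ hx hy => erw [iota_add]; exact add_mem hx hy
  | neg x _ hx => erw [iota_neg]; exact neg_mem hx

lemma degree_restrict_le (G : Multigraph) (Vs : Finset G.V) (E E' : G.V → ℤ)
    (hE : Effective E) (hE' : ∀ x, E' x ≤ E x) :
    ∑ x : {x : G.V // x ∈ Vs}, E' x.1 ≤ degree E := by
  rw [Finset.sum_coe_sort Vs E']
  exact (Finset.sum_le_sum fun x _ => hE' x).trans
    (Finset.sum_le_sum_of_subset_of_nonneg (Finset.subset_univ _) fun x _ _ => hE x)

end Multigraph

open Multigraph in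
/-- For a cut-vertex decomposition `G = H₁ ∨ H₂` of a connected graph,
`r_G(D₁ + D₂) ≥ min (r_{H₁}(D₁), r_{H₂}(D₂))`. -/
theorem wedge_rank_ge_min (G : Multigraph) (hG : G.Connected) (W : G.Wedge)
    (D1 : W.H1.V → ℤ) (D2 : W.H2.V → ℤ) :
    min (W.H1.rank D1) (W.H2.rank D2) ≤ G.rank (G.iota W.V1 D1 + G.iota W.V2 D2) := by
  have hN := hG.1
  by_cases hneg : min (W.H1.rank D1) (W.H2.rank D2) < 0
  · have := G.le_rank hN (G.iota W.V1 D1 + G.iota W.V2 D2) (-1) (Or.inl rfl)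
    omega
  refine G.le_rank hN _ _ (Or.inr ⟨by omega, fun E hE hd => ?_⟩)
  have hcov : ∀ x, x ∈ W.V1 ∨ x ∈ W.V2 := fun x => by
    have := Finset.mem_univ x
    rw [← W.cover_V] at this
    exact Finset.mem_union.1 this
  have hint : ∀ x, x ∈ W.V1 → x ∈ W.V2 → x = W.v := fun x h1 h2 => by
    have := Finset.mem_inter.2 ⟨h1, h2⟩
    rw [W.inter_V] at this
    exact Finset.mem_singleton.1 this
  have hcE : ∀ e, e ∈ W.E1 ∨ e ∈ W.E2 := fun x => by
    have := Finset.mem_univ x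
    rw [← W.cover_E] at this
    exact Finset.mem_union.1 this
  let E' : G.V → ℤ := fun x => if x = W.v then 0 else E x
  have hE'0 : ∀ x, 0 ≤ E' x := fun x => by
    simp only [E']; split_ifs
    · exact le_rfl
    · exact hE x
  have hE'1 : ∀ x, E' x ≤ E x := fun x => by
    simp only [E']; split_ifs
    · exact hE x
    · exact le_rfl
  obtain ⟨F1, hF1, hp1⟩ := W.H1.rank_spec ⟨(⟨W.v, W.hv1⟩ : {x : G.V // x ∈ W.V1})⟩ D1
    (fun x : {x : G.V // x ∈ W.V1} => E x.1) (fun x => hE x.1)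
    ((G.degree_restrict_le W.V1 E E hE fun _ => le_rfl).trans (by omega))
  obtain ⟨F2, hF2, hp2⟩ := W.H2.rank_spec ⟨(⟨W.v, W.hv2⟩ : {x : G.V // x ∈ W.V2})⟩ D2
    (fun x : {x : G.V // x ∈ W.V2} => E' x.1) (fun x => hE'0 x.1)
    ((G.degree_restrict_le W.V2 E E' hE hE'1).trans (by omega))
  have q1 := G.iota_prin W.V1 W.E1 W.ends1 W.v W.hv1 (fun e he w hw hwv => by
    have h2 := W.ends2 e ((hcE e).resolve_left he)
    exact ⟨fun hh => hwv (hint w hw (hh ▸ h2.1)), fun hh => hwv (hint w hw (hh ▸ h2.2))⟩) _ hp1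
  have q2 := G.iota_prin W.V2 W.E2 W.ends2 W.v W.hv2 (fun e he w hw hwv => by
    have h2 := W.ends1 e ((hcE e).resolve_right he)
    exact ⟨fun hh => hwv (hint w (hh ▸ h2.1) hw), fun hh => hwv (hint w (hh ▸ h2.2) hw)⟩) _ hp2
  refine ⟨G.iota W.V1 F1 + G.iota W.V2 F2, fun x => ?_, ?_⟩
  · refine add_nonneg ?_ ?_ <;> simp only [iota] <;> split_ifs
    · exact hF1 _
    · exact le_rfl
    · exact hF2 _
    · exact le_rfl
  · convert add_mem q1 q2 using 1
    funext x
    simp only [iota, Pi.add_apply, Pi.sub_apply, E']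
    by_cases h1 : x ∈ W.V1 <;> by_cases h2 : x ∈ W.V2
    · have := hint x h1 h2
      simp only [h1, h2, dif_pos, if_pos this]
      erw [Pi.sub_apply, Pi.sub_apply, Pi.sub_apply, Pi.sub_apply]
      simp only [if_pos this]
      ring
    · simp only [h1, h2, dif_pos, dif_neg, not_false_eq_true]
      erw [Pi.sub_apply, Pi.sub_apply]
      ring
    · have : x ≠ W.v := fun hh => h1 (hh ▸ W.hv1)
      simp only [h1, h2, dif_pos, dif_neg, not_false_eq_true]
      erw [Pi.sub_apply, Pi.sub_apply]
      simp only [if_neg this]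
      ring
    · exact absurd (hcov x) (by tauto)
end

section
/- Let G be a connected loopless graph with a cut vertex and corresponding decomposition G = H₁ ∨ H₂, let m, n be nonnegative integers, and let G^{(m,n)} = H₁^{(m)} ∨ H₂^{(n)} be the refinement of G obtained by inserting m vertices in the interior of every edge of H₁ and n vertices in the interior of every edge of H₂. Then for every divisor D ∈ Div(G) one has r_G(D) = r_{G^{(m,n)}}(σ*_{m,n} D). -/
namespace Multigraph

/-- Laplacian. -/
def lap (G : Multigraph) (f : G.V → ℤ) (x : G.V) : ℤ :=
  ∑ e : G.E, ((if (G.ends e).1 = x then f (G.ends e).2 - f (G.ends e).1 else 0)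
            + (if (G.ends e).2 = x then f (G.ends e).1 - f (G.ends e).2 else 0))

theorem lap_add (G : Multigraph) (f g : G.V → ℤ) : G.lap (f + g) = G.lap f + G.lap g := by
  funext x
  simp only [lap, Pi.add_apply, ← Finset.sum_add_distrib]
  refine Finset.sum_congr rfl fun e _ => ?_
  split_ifs <;> ring

theorem lap_neg (G : Multigraph) (f : G.V → ℤ) : G.lap (-f) = - G.lap f := by
  funext x
  simp only [lap, Pi.neg_apply, ← Finset.sum_neg_distrib]
  refine Finset.sum_congr rfl fun e _ => ?_
  split_ifs <;> ring

/-- The Laplacian as a homomorphism. -/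
def lapHom (G : Multigraph) : (G.V → ℤ) →+ (G.V → ℤ) :=
  AddMonoidHom.mk' G.lap (G.lap_add)

theorem lap_single (G : Multigraph) (v : G.V) : G.lap (Pi.single v 1) = G.T v := by
  funext w
  unfold T inter lap
  split_ifs with h
  · subst h
    unfold valency numLoops
    rw [Finset.card_filter]
    push_cast
    rw [Finset.mul_sum, ← Finset.sum_neg_distrib, ← Finset.sum_add_distrib]
    refine Finset.sum_congr rfl fun e _ => ?_
    simp only [Pi.single_apply, Prod.ext_iff]
    split_ifs <;> simp_all
  · unfold numEdges
    rw [Finset.card_filter]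
    push_cast
    refine Finset.sum_congr rfl fun e _ => ?_
    simp only [Pi.single_apply, Prod.ext_iff]
    split_ifs <;> simp_all

theorem mem_Prin (G : Multigraph) (D : G.V → ℤ) : D ∈ G.Prin ↔ ∃ f, G.lap f = D := by
  have : G.Prin = G.lapHom.range := by
    apply le_antisymm
    · unfold Prin
      rw [AddSubgroup.closure_le]
      rintro _ ⟨v, rfl⟩
      exact ⟨Pi.single v 1, G.lap_single v⟩
    · rintro _ ⟨f, rfl⟩
      have hf : f = ∑ v, f v • (Pi.single v 1 : G.V → ℤ) := by
        funext x
        simp [Finset.sum_apply, Pi.single_apply]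
      rw [hf, map_sum]
      refine AddSubgroup.sum_mem _ fun v _ => ?_
      rw [map_zsmul]
      refine AddSubgroup.zsmul_mem _ ?_ _
      have : G.lapHom (Pi.single v 1) = G.T v := G.lap_single v
      rw [this]
      exact AddSubgroup.subset_closure ⟨v, rfl⟩
  rw [this]
  rfl

/-- `D` is equivalent to an effective divisor. -/
def Eff (G : Multigraph) (D : G.V → ℤ) : Prop := ∃ f, ∀ x, 0 ≤ D x + G.lap f x

theorem eff_iff (G : Multigraph) (D : G.V → ℤ) :
    G.Eff D ↔ ∃ F : G.V → ℤ, Effective F ∧ D - F ∈ G.Prin := by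
  constructor
  · rintro ⟨f, hf⟩
    refine ⟨D + G.lap f, hf, ?_⟩
    rw [mem_Prin]
    exact ⟨-f, by rw [lap_neg]; abel⟩
  · rintro ⟨F, hF, h⟩
    rw [mem_Prin] at h
    obtain ⟨f, hf⟩ := h
    refine ⟨-f, fun x => ?_⟩
    rw [lap_neg, hf]
    have := hF x
    simpa using this

/-- maximum principle -/
theorem lap_max_left (G : Multigraph) (f g : G.V → ℤ) (x : G.V) (h : g x ≤ f x) :
    G.lap f x ≤ G.lap (fun y => max (f y) (g y)) x := by
  unfold lap
  refine Finset.sum_le_sum fun e _ => ?_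
  refine add_le_add ?_ ?_
  · split_ifs with h1
    · subst h1
      beta_reduce
      rw [max_eq_left h]
      have := le_max_left (f (G.ends e).2) (g (G.ends e).2)
      omega
    · exact le_rfl
  · split_ifs with h1
    · subst h1
      beta_reduce
      rw [max_eq_left h]
      have := le_max_left (f (G.ends e).1) (g (G.ends e).1)
      omega
    · exact le_rfl

theorem lap_max_right (G : Multigraph) (f g : G.V → ℤ) (x : G.V) (h : f x ≤ g x) :
    G.lap g x ≤ G.lap (fun y => max (f y) (g y)) x := by
  have := G.lap_max_left g f x h
  simpa only [max_comm] using this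

section sub
variable {G : Multigraph} {n : G.E → ℕ}

/-- Old vertices. -/
def vl (n : G.E → ℕ) (y : G.V) : (G.subdivide n).V := Sum.inl y

/-- New vertices. -/
def vr (n : G.E → ℕ) (p : Σ e : G.E, Fin (n e)) : (G.subdivide n).V := Sum.inr p

/-- Functions on the subdivision. -/
def mkF (n : G.E → ℕ) (f : G.V → ℤ) (g : (Σ e : G.E, Fin (n e)) → ℤ) :
    (G.subdivide n).V → ℤ := Sum.elim f g

theorem mkF_vl (f : G.V → ℤ) (g : (Σ e : G.E, Fin (n e)) → ℤ) (y : G.V) :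
    mkF n f g (vl n y) = f y := rfl

theorem mkF_vr (f : G.V → ℤ) (g : (Σ e : G.E, Fin (n e)) → ℤ) (p : Σ e : G.E, Fin (n e)) :
    mkF n f g (vr n p) = g p := rfl

theorem sm_vl (D : G.V → ℤ) (y : G.V) : G.subdivMap n D (vl n y) = D y := rfl

theorem sm_vr (D : G.V → ℤ) (p : Σ e : G.E, Fin (n e)) : G.subdivMap n D (vr n p) = 0 := rfl

theorem v_cases (x : (G.subdivide n).V) : (∃ y, x = vl n y) ∨ (∃ e k, x = vr n ⟨e, k⟩) := by
  rcases x with y | ⟨e, k⟩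
  · exact Or.inl ⟨y, rfl⟩
  · exact Or.inr ⟨e, k, rfl⟩

theorem vl_inj (y z : G.V) : vl n y = vl n z ↔ y = z := Sum.inl_injective.eq_iff

theorem vr_inj (y z : Σ e : G.E, Fin (n e)) : vr n y = vr n z ↔ y = z :=
  Sum.inr_injective.eq_iff

theorem vl_ne (y : G.V) (p : Σ e : G.E, Fin (n e)) : vl n y ≠ vr n p := Sum.inl_ne_inr

theorem sum_v (f : (G.subdivide n).V → ℤ) :
    ∑ x, f x = ∑ y, f (vl n y) + ∑ p, f (vr n p) := Fintype.sum_sum_type _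

theorem sm_sub (D E : G.V → ℤ) :
    G.subdivMap n (D - E) = G.subdivMap n D - G.subdivMap n E := by
  funext x
  rcases v_cases x with ⟨y, rfl⟩ | ⟨e, k, rfl⟩
  · simp only [Pi.sub_apply, sm_vl]
  · simp only [Pi.sub_apply, sm_vr, sub_zero]

/-- The `k`-th vertex along the subdivided edge `e`. -/
def pos (n : G.E → ℕ) (e : G.E) (k : ℕ) : (G.subdivide n).V :=
  if k = 0 then vl n (G.ends e).1
  else if h : k - 1 < n e then vr n ⟨e, ⟨k - 1, h⟩⟩ else vl n (G.ends e).2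

theorem pos_zero (e : G.E) : pos n e 0 = vl n (G.ends e).1 := by simp [pos]

theorem pos_last (e : G.E) : pos n e (n e + 1) = vl n (G.ends e).2 := by simp [pos]

theorem pos_succ (e : G.E) (k : Fin (n e)) : pos n e (k + 1) = vr n ⟨e, k⟩ := by
  simp [pos]

theorem subdivide_ends (e : G.E) (i : Fin (n e + 1)) : (G.subdivide n).ends ⟨e, i⟩ =
    (if h : (i : ℕ) = 0 then vl n (G.ends e).1
        else vr n ⟨e, ⟨(i : ℕ) - 1, by have := i.isLt; omega⟩⟩,
     if h : (i : ℕ) = n e then vl n (G.ends e).2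
        else vr n ⟨e, ⟨(i : ℕ), by have := i.isLt; omega⟩⟩) := rfl

theorem ends_eq (e : G.E) (i : Fin (n e + 1)) :
    (G.subdivide n).ends ⟨e, i⟩ = (pos n e i, pos n e (i + 1)) := by
  have := i.2
  rw [subdivide_ends]
  unfold pos
  ext1
  · dsimp only
    split_ifs with h1 h2
    · rfl
    · rfl
    · exact absurd (show (i : ℕ) - 1 < n e by omega) h2
  · dsimp only
    simp only [Nat.add_sub_cancel, Nat.succ_ne_zero, if_false]
    split_ifs <;> first | rfl | omega

theorem pos_eq_inl (e : G.E) (y : G.V) (i : ℕ) (hi : i ≤ n e + 1) :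
    pos n e i = vl n y ↔ (i = 0 ∧ (G.ends e).1 = y) ∨ (i = n e + 1 ∧ (G.ends e).2 = y) := by
  unfold pos
  split_ifs with h1 h2
  · subst h1; rw [vl_inj]; simp
  · simp only [(vl_ne _ _).symm, false_iff]; omega
  · have : i = n e + 1 := by omega
    subst this; rw [vl_inj]; simp

theorem pos_eq_inr (e e' : G.E) (k : Fin (n e)) (i : ℕ) :
    pos n e' i = vr n ⟨e, k⟩ ↔ e' = e ∧ i = k + 1 := by
  unfold pos
  have := k.2
  split_ifs with h1 h2
  · simp only [vl_ne, false_iff]; omega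
  · rw [vr_inj]
    constructor
    · intro h
      cases h
      simp; omega
    · rintro ⟨rfl, rfl⟩
      rfl
  · simp only [vl_ne, false_iff]
    rintro ⟨rfl, rfl⟩
    omega

theorem lap_sub (f : (G.subdivide n).V → ℤ) (x : (G.subdivide n).V) :
    (G.subdivide n).lap f x = ∑ e : G.E, ∑ i ∈ Finset.range (n e + 1),
      ((if pos n e i = x then f (pos n e (i+1)) - f (pos n e i) else 0)
      + (if pos n e (i+1) = x then f (pos n e i) - f (pos n e (i+1)) else 0)) := by
  unfold lap
  refine (Fintype.sum_sigma _).trans ?_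
  refine Finset.sum_congr rfl fun e _ => ?_
  rw [← Fin.sum_univ_eq_sum_range (fun i =>
      ((if pos n e i = x then f (pos n e (i+1)) - f (pos n e i) else 0)
      + (if pos n e (i+1) = x then f (pos n e i) - f (pos n e (i+1)) else 0)))]
  refine Finset.sum_congr rfl fun i _ => ?_
  rw [ends_eq]

theorem lap_inl (f : (G.subdivide n).V → ℤ) (y : G.V) :
    (G.subdivide n).lap f (vl n y) = ∑ e : G.E,
      ((if (G.ends e).1 = y then f (pos n e 1) - f (pos n e 0) else 0)
      + (if (G.ends e).2 = y then f (pos n e (n e)) - f (pos n e (n e + 1)) else 0)) := by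
  rw [lap_sub]
  refine Finset.sum_congr rfl fun e _ => ?_
  rw [Finset.sum_add_distrib]
  congr 1
  · rw [Finset.sum_eq_single 0]
    · simp only [pos_zero, vl_inj]
    · intro i hi h0
      rw [if_neg]
      have := Finset.mem_range.1 hi
      rw [pos_eq_inl _ _ _ (by omega)]
      omega
    · simp
  · rw [Finset.sum_eq_single (n e)]
    · simp only [pos_last, vl_inj]
    · intro i hi h0
      rw [if_neg]
      have := Finset.mem_range.1 hi
      rw [pos_eq_inl _ _ _ (by omega)]
      omega
    · simp

theorem lap_inr (f : (G.subdivide n).V → ℤ) (e : G.E) (k : Fin (n e)) :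
    (G.subdivide n).lap f (vr n ⟨e, k⟩) =
      f (pos n e (k + 2)) + f (pos n e k) - 2 * f (pos n e (k + 1)) := by
  rw [lap_sub, Finset.sum_eq_single e]
  · have := k.2
    rw [Finset.sum_add_distrib, Finset.sum_eq_single ((k : ℕ) + 1),
      Finset.sum_eq_single (k : ℕ)]
    · rw [if_pos, if_pos]
      · ring
      · exact pos_succ e k
      · exact pos_succ e k
    · intro i _ hi
      rw [if_neg]
      rw [pos_eq_inr]; omega
    · intro h; exfalso; apply h; rw [Finset.mem_range]; omega
    · intro i _ hi
      rw [if_neg]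
      rw [pos_eq_inr]; omega
    · intro h; exfalso; apply h; rw [Finset.mem_range]; omega
  · intro e' _ he
    refine Finset.sum_eq_zero fun i _ => ?_
    rw [if_neg, if_neg, add_zero] <;> (rw [pos_eq_inr]; tauto)
  · simp

theorem lap_pos (f : (G.subdivide n).V → ℤ) (e : G.E) (k : ℕ) (hk : k < n e) :
    (G.subdivide n).lap f (pos n e (k+1)) =
      f (pos n e (k + 2)) + f (pos n e k) - 2 * f (pos n e (k + 1)) := by
  have := lap_inr f e ⟨k, hk⟩
  rw [← pos_succ] at this
  exact this

/-- A tent function. -/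
def tent (i j s k : ℤ) : ℤ := - max 0 (min (min (k - i) (j - k)) s)

/-- The tent function on the subdivision. -/
def tentF (n : G.E → ℕ) (e : G.E) (i j s : ℤ) : (G.subdivide n).V → ℤ :=
  mkF n (fun _ => 0) (fun p => if p.1 = e then tent i j s ((p.2 : ℕ) + 1) else 0)

theorem tentF_pos (e e' : G.E) (i j s : ℤ) (hi : 0 ≤ i) (hj : j ≤ n e + 1) (k : ℕ)
    (hk : k ≤ n e' + 1) :
    tentF n e i j s (pos n e' k) = if e' = e then tent i j s k else 0 := by
  unfold pos tentF
  split_ifs with h1 h2 h3 h3 h3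
  · subst h1
    simp only [mkF_vl, tent]; omega
  · simp only [mkF_vl]
  · simp only [mkF_vr, if_pos h3]
    congr 1; omega
  · simp only [mkF_vr, if_neg h3]
  · subst h3
    simp only [mkF_vl, tent]; omega
  · simp only [mkF_vl]

theorem tent_lap (hL : G.Loopless) (e : G.E) (i j p s : ℕ) (hip : i < p) (hpj : p < j)
    (hj : j ≤ n e + 1) (hs : s = min (p - i) (j - p)) (x : (G.subdivide n).V) :
    (if pos n e p = x then 1 else 0) - (if pos n e i = x then 1 else 0)
      - (if pos n e j = x then 1 else 0) ≤ (G.subdivide n).lap (tentF n e i j s) x := by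
  have hT := fun e' k hk => tentF_pos (n := n) e e' i j s (by omega) (by omega) k hk
  rcases v_cases x with ⟨y, rfl⟩ | ⟨e', k, rfl⟩
  · rw [lap_inl, Finset.sum_eq_single e]
    · rw [hT e _ (by omega), hT e _ (by omega), hT e _ (by omega), hT e _ (by omega)]
      have h0 := hL e
      simp only [pos_eq_inl (n := n) e y i (by omega), pos_eq_inl (n := n) e y j (by omega),
        pos_eq_inl (n := n) e y p (by omega), if_true, tent]
      have z1 : ¬ p = 0 := by omega
      have z2 : ¬ p = n e + 1 := by omega
      have z3 : ¬ i = n e + 1 := by omega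
      have z4 : ¬ j = 0 := by omega
      simp only [z1, z2, z3, z4, false_and, or_false, false_or, if_false]
      by_cases y1 : (G.ends e).1 = y
      · have y2 : ¬ (G.ends e).2 = y := fun h => h0 (y1.trans h.symm)
        simp only [y1, y2, and_true, and_false, if_true, if_false]
        push_cast
        split_ifs <;> omega
      · by_cases y2 : (G.ends e).2 = y
        · simp only [y1, y2, and_true, and_false, if_true, if_false]
          push_cast
          split_ifs <;> omega
        · simp only [y1, y2, and_false, if_false]
          omega
    · intro e' _ he
      rw [hT e' _ (by omega), hT e' _ (by omega), hT e' _ (by omega), hT e' _ (by omega)]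
      simp [he]
    · simp
  · have := k.2
    rw [lap_inr, hT e' _ (by omega), hT e' _ (by omega), hT e' _ (by omega)]
    simp only [pos_eq_inr, tent]
    by_cases he : e' = e
    · subst he
      simp only [true_and, if_true]
      push_cast
      split_ifs <;> omega
    · have he' : ¬ e = e' := fun h => he h.symm
      simp [he, he']

/-- `F` is equivalent to an effective divisor with a chip at `q`. -/
def Chip (G : Multigraph) (F : G.V → ℤ) (q : G.V) : Prop :=
  ∃ f, (∀ x, 0 ≤ F x + G.lap f x) ∧ 1 ≤ F q + G.lap f q

theorem chip_iff (G : Multigraph) (F : G.V → ℤ) (q : G.V) :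
    Chip G F q ↔ G.Eff (F - Pi.single q 1) := by
  constructor
  · rintro ⟨f, h1, h2⟩
    refine ⟨f, fun x => ?_⟩
    have := h1 x
    by_cases hx : x = q
    · subst hx; simp; omega
    · simp [hx]; omega
  · rintro ⟨f, h⟩
    refine ⟨f, fun x => ?_, ?_⟩
    · have := h x
      by_cases hx : x = q
      · subst hx; simp at this; omega
      · simpa [hx] using this
    · have := h q
      simp at this; omega

theorem pos_ne (hL : G.Loopless) (e : G.E) (i j : ℕ) (hij : i < j) (hj : j ≤ n e + 1) :
    pos n e i ≠ pos n e j := by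
  intro h
  by_cases h2 : j = n e + 1
  · subst h2
    rw [pos_last, pos_eq_inl _ _ _ (by omega)] at h
    have := hL e
    rcases h with h | h
    · exact this h.2
    · omega
  · obtain ⟨k, rfl⟩ : ∃ k, j = k + 1 := ⟨j - 1, by omega⟩
    have := pos_succ (n := n) e ⟨k, by omega⟩
    simp only at this
    rw [this, pos_eq_inr] at h
    simp at h; omega

theorem chip_between (hL : G.Loopless) (F : (G.subdivide n).V → ℤ) (e : G.E) (i j p : ℕ)
    (hip : i < p) (hpj : p < j) (hj : j ≤ n e + 1) (f : (G.subdivide n).V → ℤ)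
    (hf : ∀ x, 0 ≤ F x + (G.subdivide n).lap f x)
    (hfi : 1 ≤ F (pos n e i) + (G.subdivide n).lap f (pos n e i))
    (hfj : 1 ≤ F (pos n e j) + (G.subdivide n).lap f (pos n e j)) :
    Chip (G.subdivide n) F (pos n e p) := by
  have hT := tent_lap (n := n) hL e i j p _ hip hpj hj rfl
  have h1 := pos_ne (n := n) hL e i j (by omega) hj
  have h2 := pos_ne (n := n) hL e i p (by omega) (by omega)
  have h3 := pos_ne (n := n) hL e p j (by omega) (by omega)
  refine ⟨f + tentF n e i j (min (p - i) (j - p) : ℕ), fun x => ?_, ?_⟩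
  · rw [lap_add, Pi.add_apply]
    have hx := hT x
    have hfx := hf x
    by_cases hi : pos n e i = x
    · subst hi
      rw [if_neg h2.symm, if_pos rfl, if_neg h1.symm] at hx
      omega
    · by_cases hj : pos n e j = x
      · subst hj
        rw [if_neg h3, if_pos rfl, if_neg h1] at hx
        omega
      · rw [if_neg hi, if_neg hj] at hx
        split_ifs at hx <;> omega
  · rw [lap_add, Pi.add_apply]
    have hx := hT (pos n e p)
    rw [if_pos rfl, if_neg h2, if_neg h3.symm] at hx
    have := hf (pos n e p)
    omega

theorem chip_mid (hL : G.Loopless) (F : (G.subdivide n).V → ℤ) (e : G.E)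
    (h1 : Chip (G.subdivide n) F (vl n (G.ends e).1))
    (h2 : Chip (G.subdivide n) F (vl n (G.ends e).2)) (k : Fin (n e)) :
    Chip (G.subdivide n) F (vr n ⟨e, k⟩) := by
  obtain ⟨f, hf, hf1⟩ := h1
  obtain ⟨g, hg, hg1⟩ := h2
  rw [← pos_zero (n := n)] at hf1
  rw [← pos_last (n := n)] at hg1
  rw [← pos_succ]
  obtain ⟨k, hk⟩ := k
  simp only
  by_contra hcon
  -- no chips of first beyond
  have hA : ∀ j, k < j → j ≤ n e → F (pos n e j) + (G.subdivide n).lap f (pos n e j) = 0 := by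
    intro j hj hjn
    by_contra hne
    have h0 := hf (pos n e j)
    rcases Nat.lt_or_ge (k+1) j with hl | hl
    · exact hcon (chip_between hL F e 0 j (k+1) (by omega) hl (by omega) f hf hf1 (by omega))
    · obtain rfl : j = k + 1 := by omega
      exact hcon ⟨f, hf, by omega⟩
  have hB : ∀ j, 0 < j → j ≤ k + 1 →
      F (pos n e j) + (G.subdivide n).lap g (pos n e j) = 0 := by
    intro j hj hjn
    by_contra hne
    have h0 := hg (pos n e j)
    rcases Nat.lt_or_ge j (k+1) with hl | hl
    · exact hcon (chip_between hL F e j (n e + 1) (k+1) hl (by omega) (by omega) g hg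
        (by omega) hg1)
    · obtain rfl : j = k + 1 := by omega
      exact hcon ⟨g, hg, by omega⟩
  set c : ℤ := f (pos n e (k+1)) - g (pos n e (k+1)) with hc
  have hgc : (G.subdivide n).lap (fun y => g y + c) = (G.subdivide n).lap g := by
    funext x; simp [lap]
  set M : (G.subdivide n).V → ℤ := fun y => max (f y) (g y + c) with hM
  have hMf : ∀ x, g x + c ≤ f x → (G.subdivide n).lap f x ≤ (G.subdivide n).lap M x :=
    fun x hx => lap_max_left _ f (fun y => g y + c) x hx
  have hMg : ∀ x, f x ≤ g x + c → (G.subdivide n).lap g x ≤ (G.subdivide n).lap M x := by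
    intro x hx
    rw [← hgc]
    exact lap_max_right _ f (fun y => g y + c) x hx
  have hM0 : ∀ x, 0 ≤ F x + (G.subdivide n).lap M x := by
    intro x
    have := hf x
    have := hg x
    rcases le_total (f x) (g x + c) with h | h
    · have := hMg x h; omega
    · have := hMf x h; omega
  -- at the point
  have hp : ¬ 1 ≤ F (pos n e (k+1)) + (G.subdivide n).lap M (pos n e (k+1)) :=
    fun h => hcon ⟨M, hM0, h⟩
  have hAp := hA (k+1) (by omega) (by omega)
  have hBp := hB (k+1) (by omega) (by omega)
  rw [lap_pos _ _ _ hk] at hp hAp hBp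
  simp only [hM] at hp
  have e1 : f (pos n e k) - g (pos n e k) = c := by omega
  have e2 : f (pos n e (k+2)) - g (pos n e (k+2)) = c := by omega
  -- descend
  have hD : ∀ d, d ≤ k → c ≤ f (pos n e (k - d)) - g (pos n e (k - d)) ∧
      f (pos n e (k - d + 1)) - g (pos n e (k - d + 1)) ≤
        f (pos n e (k - d)) - g (pos n e (k - d)) := by
    intro d
    induction d with
    | zero => intro _; simp only [Nat.sub_zero]; omega
    | succ d ih =>
      intro hd
      have ih := ih (by omega)
      obtain ⟨q, hq⟩ : ∃ q, k - d = q + 1 := ⟨k - d - 1, by omega⟩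
      have hq' : k - (d+1) = q := by omega
      rw [hq] at ih
      rw [hq']
      have a1 := hf (pos n e (q+1))
      have a2 := hB (q+1) (by omega) (by omega)
      rw [lap_pos _ _ _ (by omega)] at a1 a2
      have : q + 1 + 1 = q + 2 := rfl
      rw [this] at ih
      omega
  have hU : ∀ d, k + 1 + d ≤ n e → f (pos n e (k + 2 + d)) - g (pos n e (k + 2 + d)) ≤ c ∧
      f (pos n e (k + 2 + d)) - g (pos n e (k + 2 + d)) ≤
        f (pos n e (k + 1 + d)) - g (pos n e (k + 1 + d)) := by
    intro d
    induction d with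
    | zero => intro _; simp only [Nat.add_zero]; omega
    | succ d ih =>
      intro hd
      have ih := ih (by omega)
      have a1 := hg (pos n e (k + 1 + d + 1))
      have a2 := hA (k + 1 + d + 1) (by omega) (by omega)
      rw [lap_pos _ _ _ (by omega)] at a1 a2
      have r1 : k + 1 + d + 2 = k + 2 + (d + 1) := by omega
      have r2 : k + 1 + d + 1 = k + 2 + d := by omega
      have r3 : k + 1 + (d + 1) = k + 2 + d := by omega
      rw [r1, r2] at a1 a2
      rw [r3]
      omega
  have h0 := (hD k le_rfl).1
  rw [Nat.sub_self] at h0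
  have hN := (hU (n e - k - 1) (by omega)).1
  rw [show k + 2 + (n e - k - 1) = n e + 1 by omega] at hN
  refine hcon (chip_between hL F e 0 (n e + 1) (k+1) (by omega) (by omega) le_rfl M hM0 ?_ ?_)
  · have := hMf (pos n e 0) (by omega); omega
  · have := hMg (pos n e (n e + 1)) (by omega); omega

theorem eff_all (hL : G.Loopless) (D : (G.subdivide n).V → ℤ) (r : ℤ)
    (h : ∀ E : G.V → ℤ, Effective E → degree E = r →
      (G.subdivide n).Eff (D - G.subdivMap n E)) (N : ℕ) :
    ∀ E : (G.subdivide n).V → ℤ, Effective E → degree E = r →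
      ∑ p : (Σ e : G.E, Fin (n e)), E (vr n p) = N → (G.subdivide n).Eff (D - E) := by
  induction N with
  | zero =>
    intro E hE hd hs
    have h0 : ∀ p, E (vr n p) = 0 := by
      have := (Finset.sum_eq_zero_iff_of_nonneg
        (fun p _ => hE (vr n p))).1 (by simpa using hs)
      simpa using this
    have hEE : E = G.subdivMap n (fun x => E (vl n x)) := by
      funext x
      rcases v_cases x with ⟨y, rfl⟩ | ⟨e, k, rfl⟩
      · rfl
      · rw [h0]; rfl
    rw [hEE]
    refine h _ (fun x => hE _) ?_
    rw [← hd]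
    unfold degree
    rw [sum_v, show (∑ p : (Σ e : G.E, Fin (n e)), E (vr n p)) = 0 by simpa using hs, add_zero]
  | succ N ih =>
    intro E hE hd hs
    obtain ⟨⟨e, k⟩, hp⟩ : ∃ p, 0 < E (vr n p) := by
      by_contra hcon
      push Not at hcon
      have := Finset.sum_nonpos (s := Finset.univ) (fun p _ => hcon p)
      omega
    set q : (G.subdivide n).V := vr n ⟨e, k⟩ with hq
    have key : ∀ u : G.V, Chip (G.subdivide n) (D - (E - Pi.single q 1)) (vl n u) := by
      intro u
      rw [chip_iff]
      have := ih (E - Pi.single q 1 + Pi.single (vl n u) 1) ?_ ?_ ?_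
      · convert this using 1
        abel
      · intro x
        have hx := hE x
        have h2 : (0:ℤ) ≤ (Pi.single (vl n u) 1 :
            (G.subdivide n).V → ℤ) x := by
          rw [Pi.single_apply]; split_ifs <;> simp
        by_cases hxq : x = q
        · subst hxq; simp only [Pi.add_apply, Pi.sub_apply, Pi.single_eq_same]; omega
        · simp only [Pi.add_apply, Pi.sub_apply, Pi.single_eq_of_ne hxq]; omega
      · rw [← hd]
        simp [degree, Finset.sum_add_distrib, Finset.sum_sub_distrib]
      · have e1 : ∀ p : (Σ e : G.E, Fin (n e)),
            (E - Pi.single q 1 + Pi.single (vl n u) 1 : (G.subdivide n).V → ℤ) (vr n p)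
              = E (vr n p) - (if p = ⟨e, k⟩ then 1 else 0) := by
          intro p
          have e2 : vr n p ≠ vl n u := (vl_ne _ _).symm
          have e3 : ((vr n p) = q) ↔ p = ⟨e, k⟩ := by
            rw [hq]; exact vr_inj _ _
          rw [Pi.add_apply, Pi.sub_apply, Pi.single_eq_of_ne e2, Pi.single_apply]
          simp only [e3, add_zero]
        rw [Finset.sum_congr rfl (fun p _ => e1 p), Finset.sum_sub_distrib, hs]
        simp
    have := (chip_iff _ _ _).1 (chip_mid hL _ e (key _) (key _) k)
    convert this using 1
    rw [← hq]; abel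

theorem eff_up (D : G.V → ℤ) (f f0 : G.V → ℤ) (hf : ∀ x, 0 ≤ D x + G.lap f x)
    (h0 : ∀ e, f0 (G.ends e).2 - f0 (G.ends e).1 =
      (n e + 1) * (f (G.ends e).2 - f (G.ends e).1)) :
    (G.subdivide n).Eff (G.subdivMap n D) := by
  let F : (G.subdivide n).V → ℤ := mkF n f0 (fun p => f0 (G.ends p.1).1 +
    ((p.2 : ℕ) + 1) * (f (G.ends p.1).2 - f (G.ends p.1).1))
  have hF : ∀ e k, k ≤ n e + 1 → F (pos n e k) = f0 (G.ends e).1 +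
    k * (f (G.ends e).2 - f (G.ends e).1) := by
    intro e k hk
    unfold pos
    split_ifs with h1 h2
    · subst h1; simp [F, mkF_vl]
    · simp only [F, mkF_vr]
      congr 2; omega
    · obtain rfl : k = n e + 1 := by omega
      have := h0 e
      simp only [F, mkF_vl]
      push_cast
      linarith
  refine ⟨F, fun x => ?_⟩
  rcases v_cases x with ⟨y, rfl⟩ | ⟨e, k, rfl⟩
  · have := hf y
    rw [lap_inl]
    unfold lap at this
    refine this.trans_eq ?_
    congr 1
    refine Finset.sum_congr rfl fun e _ => ?_
    rw [hF e _ (by omega), hF e _ (by omega), hF e _ (by omega), hF e _ (by omega)]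
    push_cast
    congr 2 <;> ring
  · have := k.2
    rw [lap_inr, hF _ _ (by omega), hF _ _ (by omega), hF _ _ (by omega)]
    simp only [sm_vr]
    push_cast
    apply le_of_eq; ring

theorem convex_le (a : ℕ → ℤ) (N : ℕ) (h : ∀ k, k < N → 0 ≤ a (k+2) + a k - 2 * a (k+1)) :
    ((N : ℤ) + 1) * (a 1 - a 0) ≤ a (N+1) - a 0 ∧ a 1 - a 0 ≤ a (N+1) - a N := by
  induction N with
  | zero => simp
  | succ N ih =>
    have ih := ih (fun k hk => h k (by omega))
    have := h N (by omega)
    push_cast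
    constructor
    · linarith
    · show _ ≤ a (N+2) - _
      omega

theorem convex_le' (a : ℕ → ℤ) (N : ℕ) (h : ∀ k, k < N → 0 ≤ a (k+2) + a k - 2 * a (k+1)) :
    ((N : ℤ) + 1) * (a N - a (N+1)) ≤ a 0 - a (N+1) := by
  induction N with
  | zero => simp
  | succ N ih =>
    have ih := ih (fun k hk => h k (by omega))
    have := h N (by omega)
    push_cast
    show _ * (_ - a (N+2)) ≤ _ - a (N+2)
    nlinarith

theorem eff_down (D : G.V → ℤ)
    (h0 : ∀ f0 : G.V → ℤ, ∃ f : G.V → ℤ, ∀ e,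
      (f0 (G.ends e).2 - f0 (G.ends e).1) / (n e + 1) ≤ f (G.ends e).2 - f (G.ends e).1 ∧
      (f0 (G.ends e).1 - f0 (G.ends e).2) / (n e + 1) ≤ f (G.ends e).1 - f (G.ends e).2)
    (h : (G.subdivide n).Eff (G.subdivMap n D)) : G.Eff D := by
  obtain ⟨F, hF⟩ := h
  obtain ⟨f, hf⟩ := h0 (fun x => F (vl n x))
  refine ⟨f, fun y => ?_⟩
  have := hF (vl n y)
  rw [lap_inl] at this
  refine this.trans ?_
  unfold lap
  simp only [sm_vl] at this ⊢
  gcongr with e he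
  all_goals
    have hc : ∀ k, k < n e → 0 ≤ F (pos n e (k+2)) + F (pos n e k) - 2 * F (pos n e (k+1)) := by
      intro k hk
      have := hF (pos n e (k+1))
      rw [lap_pos _ _ _ hk] at this
      have h2 := pos_succ (n := n) e ⟨k, hk⟩
      simp only at h2
      have h3 : G.subdivMap n D (pos n e (k+1)) = 0 := by rw [h2]; rfl
      rw [h3] at this
      omega
    have c1 := (convex_le (fun k => F (pos n e k)) (n e) hc).1
    have c2 := convex_le' (fun k => F (pos n e k)) (n e) hc
    have hfe := hf e
    rw [← pos_zero (n := n), ← pos_last (n := n)] at hfe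
    split_ifs
  · refine le_trans ?_ hfe.1
    rw [Int.le_ediv_iff_mul_le (by omega)]
    linarith
  · exact le_rfl
  · refine le_trans ?_ hfe.2
    rw [Int.le_ediv_iff_mul_le (by omega)]
    linarith
  · exact le_rfl

end sub

theorem Wedge.mem2 {G : Multigraph} (W : G.Wedge) (e : G.E) (he : e ∉ W.E1) (x : G.V)
    (hx : x = (G.ends e).1 ∨ x = (G.ends e).2) : x ∉ W.V1 ∨ x = W.v := by
  have h2 : e ∈ W.E2 := by
    have : e ∈ W.E1 ∪ W.E2 := by rw [W.cover_E]; simp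
    simpa [he] using this
  have hx2 : x ∈ W.V2 := by
    rcases hx with rfl | rfl
    · exact (W.ends2 e h2).1
    · exact (W.ends2 e h2).2
  by_cases h1 : x ∈ W.V1
  · right
    have : x ∈ W.V1 ∩ W.V2 := Finset.mem_inter.2 ⟨h1, hx2⟩
    rw [W.inter_V] at this
    simpa using this
  · exact Or.inl h1

theorem Wedge.up {G : Multigraph} (W : G.Wedge) (m n : ℕ) (f : G.V → ℤ) :
    ∃ f0 : G.V → ℤ, ∀ e, f0 (G.ends e).2 - f0 (G.ends e).1 =
      (((if e ∈ W.E1 then m else n : ℕ) : ℤ) + 1) * (f (G.ends e).2 - f (G.ends e).1) := by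
  let f0 : G.V → ℤ := fun x => if x ∈ W.V1 then (m + 1) * (f x - f W.v)
    else (n + 1) * (f x - f W.v)
  refine ⟨f0, fun e => ?_⟩
  by_cases he : e ∈ W.E1
  · have := W.ends1 e he
    simp only [f0, he, this.1, this.2, if_true]
    ring
  · have key : ∀ x, (x ∉ W.V1 ∨ x = W.v) → f0 x = (n + 1) * (f x - f W.v) := by
      rintro x (hx | rfl)
      · simp [f0, hx]
      · simp [f0]
    rw [key _ (W.mem2 e he _ (Or.inl rfl)), key _ (W.mem2 e he _ (Or.inr rfl)), if_neg he]
    ring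

theorem div_sub_le (a b c : ℤ) (hc : 0 < c) : (a - b) / c ≤ a / c - b / c := by
  rw [le_sub_iff_add_le, Int.le_ediv_iff_mul_le hc]
  have h1 := Int.ediv_mul_le (a - b) hc.ne'
  have h2 := Int.ediv_mul_le b hc.ne'
  linarith

theorem Wedge.down {G : Multigraph} (W : G.Wedge) (m n : ℕ) (f0 : G.V → ℤ) :
    ∃ f : G.V → ℤ, ∀ e,
      (f0 (G.ends e).2 - f0 (G.ends e).1) / (((if e ∈ W.E1 then m else n : ℕ) : ℤ) + 1)
        ≤ f (G.ends e).2 - f (G.ends e).1 ∧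
      (f0 (G.ends e).1 - f0 (G.ends e).2) / (((if e ∈ W.E1 then m else n : ℕ) : ℤ) + 1)
        ≤ f (G.ends e).1 - f (G.ends e).2 := by
  let f : G.V → ℤ := fun x => if x ∈ W.V1 then (f0 x - f0 W.v) / (m + 1)
    else (f0 x - f0 W.v) / (n + 1)
  have main : ∀ (c : ℕ) (x y : G.V), f x = (f0 x - f0 W.v) / (c + 1) →
      f y = (f0 y - f0 W.v) / (c + 1) → (f0 x - f0 y) / ((c : ℤ) + 1) ≤ f x - f y := by
    intro c x y hx hy
    rw [hx, hy]
    have := div_sub_le (f0 x - f0 W.v) (f0 y - f0 W.v) (c + 1) (by omega)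
    simpa using this
  refine ⟨f, fun e => ?_⟩
  by_cases he : e ∈ W.E1
  · have := W.ends1 e he
    rw [if_pos he]
    have h1 : f (G.ends e).1 = (f0 (G.ends e).1 - f0 W.v) / (m + 1) := by simp [f, this.1]
    have h2 : f (G.ends e).2 = (f0 (G.ends e).2 - f0 W.v) / (m + 1) := by simp [f, this.2]
    exact ⟨main m _ _ h2 h1, main m _ _ h1 h2⟩
  · have key : ∀ x, (x ∉ W.V1 ∨ x = W.v) → f x = (f0 x - f0 W.v) / (n + 1) := by
      rintro x (hx | rfl)
      · simp [f, hx]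
      · simp [f]
    rw [if_neg he]
    have h1 := key _ (W.mem2 e he _ (Or.inl rfl))
    have h2 := key _ (W.mem2 e he _ (Or.inr rfl))
    exact ⟨main n _ _ h2 h1, main n _ _ h1 h2⟩

end Multigraph

open Multigraph in
/-- For a cut-vertex decomposition `G = H₁ ∨ H₂` of a connected
loopless graph and the refinement `G^{(m,n)} = H₁^{(m)} ∨ H₂^{(n)}`,
`r_G(D) = r_{G^{(m,n)}}(σ*_{m,n} D)` for every divisor `D` on `G`. -/
theorem wedge_subdivision_rank (G : Multigraph) (hG : G.Connected) (hL : G.Loopless)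
    (W : G.Wedge) (m n : ℕ) (D : G.V → ℤ) :
    G.rank D = (G.subdivide (fun e => if e ∈ W.E1 then m else n)).rank
      (G.subdivMap (fun e => if e ∈ W.E1 then m else n) D) := by
  unfold rank
  congr 1
  ext r
  simp only [Set.mem_ofPred_eq]
  refine or_congr Iff.rfl (and_congr_right fun hr => ?_)
  simp only [← eff_iff]
  constructor
  · intro h E hE hd
    have hnn : 0 ≤ ∑ p : (Σ e : G.E, Fin (if e ∈ W.E1 then m else n)), E (vr _ p) :=
      Finset.sum_nonneg fun p _ => hE _
    refine eff_all hL _ r ?_ (∑ p : (Σ e : G.E, Fin (if e ∈ W.E1 then m else n)),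
      E (vr _ p)).toNat E hE hd (Int.toNat_of_nonneg hnn).symm
    intro E0 hE0 hd0
    obtain ⟨f, hf⟩ := h E0 hE0 hd0
    obtain ⟨f0, h0⟩ := W.up m n f
    have := eff_up (n := fun e => if e ∈ W.E1 then m else n) (D - E0) f f0 hf h0
    rwa [sm_sub] at this
  · intro h E hE hd
    refine eff_down (n := fun e => if e ∈ W.E1 then m else n) (D - E) (W.down m n) ?_
    have := h (G.subdivMap _ E) ?_ ?_
    · rwa [sm_sub]
    · rintro (x | x)
      · exact hE x
      · exact le_rfl
    · rw [← hd]
      unfold degree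
      rw [sum_v]
      simp only [sm_vl, sm_vr, Finset.sum_const_zero, add_zero]
end
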